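/- Fix two points x, y ∈ X and an exponent q ∈ (1,∞) with conjugate exponent q' = q/(q−1). Then, as elements of [0,∞], the supremum over all measurable functions f : X → [0,∞] with 0 < (T(f^q))(y) < ∞ of the quotient (Tf)(x) / ((T(f^q))(y))^{1/q} equals (∫_X (p(x,z)/p(y,z))^{q'} · p(y,z) dν(z))^{1/q'}. -/

import Mathlib

/-!
Put `μ = p(y, ·) ν` and `h = p(x, ·) / p(y, ·)`, so that `(Tf)(x) = ∫ h f dμ` and
`(T f^q)(y) = ∫ f^q dμ`. The supremum is then the norm of `h` in `L^{q'}(μ)` by duality: Hölder's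
inequality bounds every quotient, and its equality case `f^q = h^{q'}` is approximated by
`f^q = g` for simple functions `0 ≤ g ≤ h^{q'}` with finite integral, which exist because `μ` is
σ-finite.
-/

open MeasureTheory ENNReal

section Duality

open scoped NNReal

variable {X : Type*} [MeasurableSpace X] {μ : Measure X} {q q' : ℝ}

theorem exists_simpleFunc_le_lintegral_lt_top_of_lt_lintegral [SigmaFinite μ] {f : X → ℝ≥0∞}
    {L : ℝ≥0∞} (hL : L < ∫⁻ z, f z ∂μ) :
    ∃ g : SimpleFunc X ℝ≥0, (∀ z, g z ≤ f z) ∧ ∫⁻ z, g z ∂μ < ⊤ ∧ L < ∫⁻ z, g z ∂μ := by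
  rw [lintegral_eq_nnreal] at hL
  obtain ⟨φ, hφf, hLφ⟩ : ∃ φ : SimpleFunc X ℝ≥0, (∀ z, φ z ≤ f z) ∧
      L < (φ.map (fun r : ℝ≥0 => (r : ℝ≥0∞))).lintegral μ := by
    simpa only [lt_iSup_iff, exists_prop] using hL
  rw [← SimpleFunc.lintegral_eq_lintegral] at hLφ
  obtain ⟨g, hgφ, hg_fin, hLg⟩ := exists_lt_lintegral_simpleFunc_of_lt_lintegral hLφ
  exact ⟨g, fun z => (ENNReal.coe_le_coe.2 (hgφ z)).trans (hφf z), hg_fin, hLg⟩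

theorem lintegral_mul_div_rpow_le (hqq' : q.HolderConjugate q') {h f : X → ℝ≥0∞}
    (hh : AEMeasurable h μ) (hf : AEMeasurable f μ) :
    (∫⁻ z, h z * f z ∂μ) / (∫⁻ z, f z ^ q ∂μ) ^ (1 / q) ≤ (∫⁻ z, h z ^ q' ∂μ) ^ (1 / q') :=
  ENNReal.div_le_of_le_mul (ENNReal.lintegral_mul_le_Lp_mul_Lq μ hqq'.symm hh hf)

theorem rpow_lintegral_le_lintegral_mul_div_of_le_rpow (hqq' : q.HolderConjugate q')
    {g h : X → ℝ≥0∞} (hgh : ∀ z, g z ≤ h z ^ q') (hg_ne_zero : ∫⁻ z, g z ∂μ ≠ 0)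
    (hg_ne_top : ∫⁻ z, g z ∂μ ≠ ⊤) :
    (∫⁻ z, g z ∂μ) ^ (1 / q') ≤
      (∫⁻ z, h z * g z ^ (1 / q) ∂μ) / (∫⁻ z, g z ∂μ) ^ (1 / q) := by
  have rpow_mul_rpow (a : ℝ≥0∞) : a ^ (1 / q') * a ^ (1 / q) = a := by
    rw [← ENNReal.rpow_add_of_nonneg _ _ hqq'.symm.one_div_nonneg hqq'.one_div_nonneg,
      hqq'.symm.one_div_add_one_div, one_div_one, ENNReal.rpow_one]
  have rpow_le (z : X) : g z ^ (1 / q') ≤ h z := by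
    rw [one_div, ENNReal.rpow_inv_le_iff hqq'.symm.pos]
    exact hgh z
  have denom_ne_zero : (∫⁻ z, g z ∂μ) ^ (1 / q) ≠ 0 :=
    (ENNReal.rpow_pos (pos_iff_ne_zero.2 hg_ne_zero) hg_ne_top).ne'
  have denom_ne_top : (∫⁻ z, g z ∂μ) ^ (1 / q) ≠ ⊤ :=
    ENNReal.rpow_ne_top_of_nonneg hqq'.one_div_nonneg hg_ne_top
  rw [ENNReal.le_div_iff_mul_le (.inl denom_ne_zero) (.inl denom_ne_top), rpow_mul_rpow]
  calc ∫⁻ z, g z ∂μ = ∫⁻ z, g z ^ (1 / q') * g z ^ (1 / q) ∂μ := by simp only [rpow_mul_rpow]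
    _ ≤ ∫⁻ z, h z * g z ^ (1 / q) ∂μ := lintegral_mono fun z => mul_le_mul_left (rpow_le z) _

theorem iSup_lintegral_mul_div_rpow_eq [SigmaFinite μ] (hqq' : q.HolderConjugate q')
    {h : X → ℝ≥0∞} (hh : AEMeasurable h μ) :
    (⨆ (f : X → ℝ≥0∞) (_ : Measurable f)
        (_ : 0 < ∫⁻ z, f z ^ q ∂μ) (_ : ∫⁻ z, f z ^ q ∂μ < ⊤),
          (∫⁻ z, h z * f z ∂μ) / (∫⁻ z, f z ^ q ∂μ) ^ (1 / q)) =
      (∫⁻ z, h z ^ q' ∂μ) ^ (1 / q') := by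
  apply le_antisymm
  · exact iSup_le fun f => iSup_le fun hf => iSup₂_le fun _ _ =>
      lintegral_mul_div_rpow_le hqq' hh hf.aemeasurable
  · rw [one_div q', ENNReal.rpow_inv_le_iff hqq'.symm.pos]
    refine le_of_forall_lt fun L hL => ?_
    obtain ⟨g, hgh, hg_fin, hLg⟩ := exists_simpleFunc_le_lintegral_lt_top_of_lt_lintegral hL
    have hg_pos : 0 < ∫⁻ z, g z ∂μ := pos_of_gt hLg
    have rpow_rpow (z : X) : ((g z : ℝ≥0∞) ^ (1 / q)) ^ q = g z := by
      rw [one_div, ENNReal.rpow_inv_rpow hqq'.ne_zero]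
    refine hLg.trans_le ?_
    rw [← ENNReal.rpow_inv_le_iff hqq'.symm.pos, ← one_div]
    refine (rpow_lintegral_le_lintegral_mul_div_of_le_rpow hqq' hgh hg_pos.ne' hg_fin.ne).trans ?_
    refine le_iSup_of_le (fun z => (g z : ℝ≥0∞) ^ (1 / q)) <|
      le_iSup_of_le (g.measurable.coe_nnreal_ennreal.pow_const _) ?_
    simp only [rpow_rpow]
    exact le_iSup₂_of_le hg_pos hg_fin le_rfl

end Duality

theorem harnack_quotient_sup_eq_general {X : Type*} [MeasurableSpace X] {ν : Measure X}
    [SigmaFinite ν] {u w : X → ℝ≥0∞} (hu : AEMeasurable u ν) (hw : AEMeasurable w ν)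
    (hw_ne_zero : ∀ᵐ z ∂ν, w z ≠ 0) (hw_ne_top : ∀ᵐ z ∂ν, w z ≠ ⊤) {q q' : ℝ}
    (hqq' : q.HolderConjugate q') :
    (⨆ (f : X → ℝ≥0∞) (_ : Measurable f)
        (_ : 0 < ∫⁻ z, w z * f z ^ q ∂ν) (_ : ∫⁻ z, w z * f z ^ q ∂ν < ⊤),
          (∫⁻ z, u z * f z ∂ν) / (∫⁻ z, w z * f z ^ q ∂ν) ^ (1 / q)) =
      (∫⁻ z, (u z / w z) ^ q' * w z ∂ν) ^ (1 / q') := by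
  have : SigmaFinite (ν.withDensity w) := SigmaFinite.withDensity_of_ne_top hw_ne_top
  have lintegral_density (F : X → ℝ≥0∞) : ∫⁻ z, F z ∂ν.withDensity w = ∫⁻ z, w z * F z ∂ν :=
    lintegral_withDensity_eq_lintegral_mul_non_measurable₀ ν hw
      (hw_ne_top.mono fun _ => Ne.lt_top) F
  have lintegral_ratio (f : X → ℝ≥0∞) :
      ∫⁻ z, w z * (u z / w z * f z) ∂ν = ∫⁻ z, u z * f z ∂ν := by
    refine lintegral_congr_ae ?_
    filter_upwards [hw_ne_zero, hw_ne_top] with z hz_ne_zero hz_ne_top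
    rw [← mul_assoc, ENNReal.mul_div_cancel hz_ne_zero hz_ne_top]
  have ratio_aemeasurable : AEMeasurable (fun z => u z / w z) (ν.withDensity w) :=
    (hu.div hw).mono_ac (withDensity_absolutelyContinuous ν w)
  simpa only [lintegral_density, lintegral_ratio, mul_comm (w _) ((u _ / w _) ^ q')] using
    iSup_lintegral_mul_div_rpow_eq hqq' ratio_aemeasurable

/-- The supremum of the Harnack quotients `(Tf)(x) / ((T f^q)(y))^{1/q}` over
nonnegative measurable `f` equals the integrated Harnack quantity
`(∫ (p(x,z)/p(y,z))^{q'} p(y,z) dν(z))^{1/q'}`. -/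
theorem harnack_quotient_sup_eq
    {X : Type*} [MeasurableSpace X] (ν : Measure X) [SigmaFinite ν]
    (p : X → X → ℝ) (hp_meas : Measurable (Function.uncurry p))
    (hp_pos : ∀ x y, 0 < p x y)
    (hp_symm : ∀ x y, p x y = p y x)
    (hp_cons : ∀ x, ∫⁻ y, ENNReal.ofReal (p x y) ∂ν = 1)
    (T : (X → ℝ≥0∞) → X → ℝ≥0∞)
    (hT : ∀ f x, T f x = ∫⁻ z, ENNReal.ofReal (p x z) * f z ∂ν)
    (x y : X) (q : ℝ) (hq : 1 < q) (q' : ℝ) (hq' : q' = q / (q - 1)) :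
    (⨆ (f : X → ℝ≥0∞) (_ : Measurable f)
        (_ : 0 < T (fun z => (f z) ^ q) y) (_ : T (fun z => (f z) ^ q) y < ⊤),
          T f x / (T (fun z => (f z) ^ q) y) ^ (1 / q)) =
      (∫⁻ z, (ENNReal.ofReal (p x z / p y z)) ^ q' * ENNReal.ofReal (p y z) ∂ν)
        ^ (1 / q') := by
  simpa only [hT, ENNReal.ofReal_div_of_pos (hp_pos y _)] using
    harnack_quotient_sup_eq_general (hp_meas.of_uncurry_left (x := x)).ennreal_ofReal.aemeasurable
      (hp_meas.of_uncurry_left (x := y)).ennreal_ofReal.aemeasurable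
      (.of_forall fun z => (ENNReal.ofReal_pos.2 (hp_pos y z)).ne')
      (.of_forall fun _ => ofReal_ne_top) (hq' ▸ Real.HolderConjugate.conjExponent hq)
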